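/- arXiv:2410.18947 — 3 statements merged into one kernel-verified Lean document; each statement's English description precedes it below -/
import Mathlib

section
/- Fundamental Lemma, left version: let A_L : d_L → Matrix P Q ℂ and A_R : d_R → Matrix Q' S ℂ be injective MPS tensors, B : d_B → Matrix Q Q' ℂ a right-injective MPS tensor, and X : d_X → Matrix S P ℂ a family of matrices with X a ≠ 0 for some a. Let U_L : Matrix d_L d_L ℂ and L : Matrix d_B d_B ℂ be invertible matrices, and define Ψ(i,j,k,a) := trace (A_L i * B j * A_R k * X a). If ∑_{i'} ∑_{j'} (U_L i i') * (L j j') * Ψ(i',j',k,a) = Ψ(i,j,k,a) for all i, j, k, a, then there exists a unique matrix M : Matrix Q Q ℂ such that M * B j = ∑_{j'} (L j j') • B j' for all j : d_B, and this M is invertible (so writing M = V_L⁻¹, there is a unique invertible V_L with ∑_{j'} (L j j') • B j' = V_L⁻¹ * B j for all j). -/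
open Matrix

/-!
Moving the closure to the front of the trace, injectivity of `A_R` turns the symmetry into
`∑ i', U i i' • (X * A_L i' * B'_j) = X * A_L i * B j`, where `B'_j = ∑ j', L j j' • B j'`.
Let `x` be a nonzero row of `X` and `R` the matrix with rows `x ᵥ* A_L i`. The `x`-row of the
identity reads `U * R * B'_j = R * B j`, and injectivity of `A_L` gives `R` a left inverse `C`.
Hence `N * B'_j = B j` with `N = C * U * R`. Every row vector annihilated by `N` is annihilated by
all `B j`, so right injectivity of `B` makes the square matrix `N` invertible, and `M = N⁻¹`.
-/

theorem exists_mul_eq_one_of_mulVec_injective {m n K : Type*} [Field K] [Fintype m] [Fintype n]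
    [DecidableEq n] {A : Matrix m n K} (hA : Function.Injective A.mulVec) :
    ∃ C : Matrix n m K, C * A = 1 := by
  classical
  obtain ⟨g, hg⟩ := A.toLin'.exists_leftInverse_of_injective (LinearMap.ker_eq_bot.mpr hA)
  refine ⟨g.toMatrix', ?_⟩
  simpa only [LinearMap.toMatrix'_comp, LinearMap.toMatrix'_toLin', LinearMap.toMatrix'_id] using
    congrArg LinearMap.toMatrix' hg

/-- A matrix product state tensor with physical index `d`, left virtual index `P` and right virtual
index `Q`. -/
abbrev MPSTensor (d P Q R : Type*) := d → Matrix P Q R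

namespace MPSTensor

variable {d dL dR P Q Q' S R K : Type*}

section Semiring

variable [Semiring R]

/-- Injectivity of a tensor: a virtual boundary operator is determined by the physical amplitudes
obtained by closing the tensor with it. -/
def IsInjective [Fintype P] [Fintype Q] (A : MPSTensor d P Q R) : Prop :=
  Function.Injective fun (Y : Matrix Q P R) (i : d) => (A i * Y).trace

/-- Right injectivity of a tensor: the map taking a vector on the left virtual index to the
resulting tensor in the physical and right virtual indices has trivial kernel. -/
def IsRightInjective [Fintype P] (B : MPSTensor d P Q R) : Prop :=
  ∀ w : P → R, (∀ j, w ᵥ* B j = 0) → w = 0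

/-- The matrix left after closing the left virtual index of a tensor by the vector `x`; its row
index is the physical index. -/
def contractLeft [Fintype P] (x : P → R) (A : MPSTensor d P Q R) : Matrix d Q R :=
  of fun i => x ᵥ* A i

theorem contractLeft_mul_apply [Fintype P] [Fintype Q] (x : P → R) (A : MPSTensor d P Q R)
    (T : Matrix Q Q' R) (i : d) : (contractLeft x A * T) i = x ᵥ* (A i * T) := by
  rw [mul_apply_eq_vecMul, ← vecMul_vecMul]
  rfl

end Semiring

theorem IsRightInjective.eq_of_forall_mul_eq [Ring R] [Fintype P] {B : MPSTensor d P Q R}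
    (hB : B.IsRightInjective) {M M' : Matrix S P R} (h : ∀ j, M * B j = M' * B j) : M = M' := by
  funext s
  refine sub_eq_zero.mp (hB _ fun j => ?_)
  rw [sub_vecMul, ← mul_apply_eq_vecMul, ← mul_apply_eq_vecMul, h, sub_self]

theorem IsInjective.sum_smul_mul_eq [CommSemiring R] [Fintype dL] [Fintype P] [Fintype Q]
    [Fintype Q'] [Fintype S] {AR : MPSTensor dR Q' S R} (hAR : AR.IsInjective)
    {AL : MPSTensor dL P Q R} {B B' : Matrix Q Q' R} {X : Matrix S P R} {U : Matrix dL dL R}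
    (h : ∀ i k, ∑ i', U i i' * (AL i' * B' * AR k * X).trace = (AL i * B * AR k * X).trace)
    (i : dL) : ∑ i', U i i' • (X * AL i' * B') = X * AL i * B := by
  have trace_eq (T : Matrix Q Q' R) (i : dL) (k : dR) :
      (AR k * (X * AL i * T)).trace = (AL i * T * AR k * X).trace := by
    rw [Matrix.mul_assoc X, ← Matrix.mul_assoc, trace_mul_comm, ← Matrix.mul_assoc]
  refine hAR (funext fun k => ?_)
  simp only [Matrix.mul_sum, Matrix.mul_smul, trace_sum, trace_smul, smul_eq_mul, trace_eq, h]

theorem IsInjective.mulVec_contractLeft_injective [CommRing R] [NoZeroDivisors R] [Fintype P]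
    [Fintype Q] {A : MPSTensor d P Q R} (hA : A.IsInjective) {x : P → R} (hx : x ≠ 0) :
    Function.Injective (contractLeft x A).mulVec := by
  refine (injective_iff_map_eq_zero (contractLeft x A).mulVecLin).mpr fun v hv => ?_
  have vecMulVec_eq_zero : vecMulVec v x = 0 := by
    refine hA (funext fun i => ?_)
    calc (A i * vecMulVec v x).trace
        = (contractLeft x A *ᵥ v) i := by
          rw [mul_vecMulVec, trace_vecMulVec, dotProduct_comm, dotProduct_mulVec]
          rfl
      _ = (A i * (0 : Matrix Q P R)).trace := by
          rw [Matrix.mul_zero, trace_zero]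
          exact congrFun hv i
  obtain ⟨p, hp⟩ : ∃ p, x p ≠ 0 := Function.ne_iff.mp hx
  exact funext fun q => (mul_eq_zero.mp (congrFun₂ vecMulVec_eq_zero q p)).resolve_right hp

section Field

variable [Field K]

theorem IsRightInjective.isUnit_of_mul_eq [Fintype P] [DecidableEq P] {B B' : MPSTensor d P Q K}
    (hB : B.IsRightInjective) {N : Matrix P P K} (hN : ∀ j, N * B' j = B j) : IsUnit N := by
  refine vecMul_injective_iff_isUnit.mp ?_
  refine (injective_iff_map_eq_zero N.vecMulLinear).mpr fun w (hw : w ᵥ* N = 0) => ?_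
  refine hB w fun j => ?_
  rw [← hN j, ← vecMul_vecMul, hw, zero_vecMul]

theorem exists_mul_eq_of_trace_eq [Fintype dL] [Fintype P] [Fintype Q] [Fintype Q'] [Fintype S]
    {AL : MPSTensor dL P Q K} {AR : MPSTensor dR Q' S K} (hAL : AL.IsInjective)
    (hAR : AR.IsInjective) {X : Matrix S P K} (hX : X ≠ 0) (U : Matrix dL dL K) :
    ∃ N : Matrix Q Q K, ∀ B B' : Matrix Q Q' K,
      (∀ i k, ∑ i', U i i' * (AL i' * B' * AR k * X).trace = (AL i * B * AR k * X).trace) →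
        N * B' = B := by
  classical
  obtain ⟨s, hs⟩ : ∃ s, X s ≠ 0 := Function.ne_iff.mp hX
  obtain ⟨C, hC⟩ := exists_mul_eq_one_of_mulVec_injective (hAL.mulVec_contractLeft_injective hs)
  refine ⟨C * (U * contractLeft (X s) AL), fun B B' h => ?_⟩
  have row_eq : U * (contractLeft (X s) AL * B') = contractLeft (X s) AL * B := by
    have row_mul (T : Matrix Q Q' K) (i : dL) :
        (contractLeft (X s) AL * T) i = (X * AL i * T) s := by
      rw [contractLeft_mul_apply, Matrix.mul_assoc, mul_apply_eq_vecMul]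
    ext i q
    rw [row_mul, ← hAR.sum_smul_mul_eq h i, mul_apply, Matrix.sum_apply]
    simp only [row_mul, Matrix.smul_apply, smul_eq_mul]
  rw [Matrix.mul_assoc, Matrix.mul_assoc, row_eq, ← Matrix.mul_assoc, hC, Matrix.one_mul]

end Field

end MPSTensor

theorem fundamental_lemma_left_general
    {K dL dB dR dX P Q Q' S : Type*} [Field K] [Fintype dL] [Fintype dB]
    [Fintype P] [Fintype Q] [Fintype Q'] [Fintype S] [DecidableEq Q]
    (AL : MPSTensor dL P Q K) (AR : MPSTensor dR Q' S K)
    (B : MPSTensor dB Q Q' K) (X : dX → Matrix S P K)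
    (hAL : AL.IsInjective) (hAR : AR.IsInjective) (hB : B.IsRightInjective)
    (hX : ∃ a, X a ≠ 0) (UL : Matrix dL dL K) (L : Matrix dB dB K)
    (hsym : ∀ i j k a,
      (∑ i', ∑ j', UL i i' * L j j' * (AL i' * B j' * AR k * X a).trace) =
        (AL i * B j * AR k * X a).trace) :
    ∃ M : Matrix Q Q K,
      (∀ j, M * B j = ∑ j', L j j' • B j') ∧ IsUnit M ∧
        ∀ M' : Matrix Q Q K, (∀ j, M' * B j = ∑ j', L j j' • B j') → M' = M := by
  obtain ⟨a, ha⟩ := hX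
  obtain ⟨N, hN⟩ := MPSTensor.exists_mul_eq_of_trace_eq hAL hAR ha UL
  have N_mul (j : dB) : N * ∑ j', L j j' • B j' = B j := by
    refine hN _ _ fun i k => ?_
    simp only [← hsym i j k a, Matrix.mul_sum, Matrix.sum_mul, Matrix.mul_smul, Matrix.smul_mul,
      trace_sum, trace_smul, smul_eq_mul, Finset.mul_sum, mul_assoc]
  have isUnit_N : IsUnit N := hB.isUnit_of_mul_eq N_mul
  have inv_mul (j : dB) : N⁻¹ * B j = ∑ j', L j j' • B j' := by
    rw [← N_mul j, nonsing_inv_mul_cancel_left _ _ ((isUnit_iff_isUnit_det N).mp isUnit_N)]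
  exact ⟨N⁻¹, inv_mul, isUnit_nonsing_inv_iff.mpr isUnit_N, fun M' hM' =>
    hB.eq_of_forall_mul_eq fun j => (hM' j).trans (inv_mul j).symm⟩

/-- Fundamental Lemma, left version: given injective MPS tensors `A_L`, `A_R`,
a right-injective tensor `B`, a nonzero closure tensor `X`, and invertible
`U_L`, `L` with the symmetry property for the three-site state `Ψ`, there is
a unique matrix `M` with `M * B j = ∑ j', L j j' • B j'` for all `j`, and this
`M` is invertible. -/
theorem fundamental_lemma_left
    {dL dB dR dX P Q Q' S : Type*}
    [Fintype dL] [Fintype dB] [Fintype dR] [Fintype dX]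
    [Fintype P] [Fintype Q] [Fintype Q'] [Fintype S]
    [DecidableEq Q] [DecidableEq dL] [DecidableEq dB]
    (AL : dL → Matrix P Q ℂ) (AR : dR → Matrix Q' S ℂ)
    (B : dB → Matrix Q Q' ℂ) (X : dX → Matrix S P ℂ)
    (hAL : Function.Injective fun Y : Matrix Q P ℂ => fun i : dL => (AL i * Y).trace)
    (hAR : Function.Injective fun Y : Matrix S Q' ℂ => fun k : dR => (AR k * Y).trace)
    (hB : ∀ w : Q → ℂ, (∀ j, w ᵥ* B j = 0) → w = 0)
    (hX : ∃ a, X a ≠ 0)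
    (UL : Matrix dL dL ℂ) (L : Matrix dB dB ℂ)
    (hUL : IsUnit UL) (hL : IsUnit L)
    (hsym : ∀ i j k a,
      (∑ i', ∑ j', UL i i' * L j j' * (AL i' * B j' * AR k * X a).trace) =
        (AL i * B j * AR k * X a).trace) :
    ∃ M : Matrix Q Q ℂ,
      (∀ j, M * B j = ∑ j', L j j' • B j') ∧ IsUnit M ∧
        ∀ M' : Matrix Q Q ℂ, (∀ j, M' * B j = ∑ j', L j j' • B j') → M' = M :=
  fundamental_lemma_left_general AL AR B X hAL hAR hB hX UL L hsym
end

section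
/- Fundamental Lemma, right version: let A_L : d_L → Matrix P Q ℂ and A_R : d_R → Matrix Q' S ℂ be injective MPS tensors, B : d_B → Matrix Q Q' ℂ a left-injective MPS tensor, and X : d_X → Matrix S P ℂ a family of matrices with X a ≠ 0 for some a. Let U_R : Matrix d_R d_R ℂ and R : Matrix d_B d_B ℂ be invertible matrices, and define Ψ(i,j,k,a) := trace (A_L i * B j * A_R k * X a). If ∑_{j'} ∑_{k'} (R j j') * (U_R k k') * Ψ(i,j',k',a) = Ψ(i,j,k,a) for all i, j, k, a, then there exists a unique matrix V_R : Matrix Q' Q' ℂ such that ∑_{j'} (R j j') • B j' = B j * V_R for all j : d_B, and this V_R is invertible. -/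
open Matrix

/-!
Write `B'` and `AR'` for the transformed tensors and fix a component `X` of the closure that is not
zero. Since `AL` is injective, the trace identity gives `B' j * AR' k * X = B j * AR k * X`. Apply
both sides to a vector `y` with `x := X *ᵥ y ≠ 0`. The vectors `AR k *ᵥ x` span the whole bond
space because `AR` is injective (a functional `φ` vanishing on all of them would give
`trace (AR k * vecMulVec x φ) = 0` for all `k`, hence `φ = 0`), so by linearity every `u` has some
`w` with `B' j *ᵥ w = B j *ᵥ u` for all `j`; that is, `B' j * W = B j` for one square matrix `W`.
Left injectivity of `B` makes `W` injective, hence invertible, and `VR = W⁻¹`.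
-/

section CommRing

variable {ι κ m n o R : Type*} [CommRing R]

/-- Injectivity of an MPS tensor: the map sending a boundary condition on the virtual legs to the
resulting state on the physical leg `ι` is injective. -/
def IsInjectiveTensor [Fintype m] [Fintype n] (A : ι → Matrix m n R) : Prop :=
  Function.Injective fun (Y : Matrix n m R) (i : ι) => (A i * Y).trace

/-- Left injectivity of an MPS tensor: it is injective as a map from its right virtual leg `n` to
the physical leg `ι` and the left virtual leg `m` together. -/
def IsLeftInjectiveTensor [Fintype n] (B : ι → Matrix m n R) : Prop :=
  ∀ v : n → R, (∀ i, B i *ᵥ v = 0) → v = 0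

theorem IsInjectiveTensor.eq_of_forall_trace_mul_eq [Fintype m] [Fintype n]
    {A : ι → Matrix m n R} (hA : IsInjectiveTensor A) {Y Z : Matrix n m R}
    (h : ∀ i, (A i * Y).trace = (A i * Z).trace) : Y = Z :=
  hA (funext h)

theorem IsLeftInjectiveTensor.mul_left_cancel [Fintype n] {B : ι → Matrix m n R}
    (hB : IsLeftInjectiveTensor B) {M N : Matrix n o R} (h : ∀ i, B i * M = B i * N) : M = N := by
  refine ext_col fun b => sub_eq_zero.mp (hB _ fun i => ?_)
  rw [mulVec_sub, sub_eq_zero]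
  exact congrArg (col · b) (h i)

theorem IsLeftInjectiveTensor.mulVec_injective_of_mul_eq [Fintype n] [Fintype o]
    {B : ι → Matrix m n R} (hB : IsLeftInjectiveTensor B) {B' : ι → Matrix m o R}
    {W : Matrix o n R} (hW : ∀ i, B' i * W = B i) : Function.Injective W.mulVec := by
  refine (injective_iff_map_eq_zero W.mulVecLin).mpr fun v hv => hB v fun i => ?_
  rw [← hW, ← mulVec_mulVec, ← mulVecLin_apply W, hv, mulVec_zero]

theorem exists_forall_mul_eq_of_span_eq_top [Fintype n] [Fintype o]
    {B : ι → Matrix m n R} {B' : ι → Matrix m o R} {c : κ → n → R} {c' : κ → o → R}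
    (hc : Submodule.span R (Set.range c) = ⊤) (h : ∀ i k, B' i *ᵥ c' k = B i *ᵥ c k) :
    ∃ W : Matrix o n R, ∀ i, B' i * W = B i := by
  classical
  let β := LinearMap.pi fun i => (B i).mulVecLin
  let β' := LinearMap.pi fun i => (B' i).mulVecLin
  have hrange : ⊤ ≤ β'.range.comap β := by
    rw [← hc, Submodule.span_le]
    rintro _ ⟨k, rfl⟩
    exact ⟨c' k, funext (h · k)⟩
  choose w hw using fun b => hrange (Submodule.mem_top (x := Pi.single b 1))
  refine ⟨(of w)ᵀ, fun i => ext_col fun b => ?_⟩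
  calc (B' i * (of w)ᵀ).col b = B' i *ᵥ w b := rfl
    _ = B i *ᵥ Pi.single b 1 := congrFun (hw b) i
    _ = (B i).col b := mulVec_single_one ..

theorem trace_mul_sum_smul_mul_sum_smul_mul {p q : Type*} [Fintype ι] [Fintype κ] [Fintype m]
    [Fintype n] [Fintype p] [Fintype q] (L : Matrix m n R) (B : ι → Matrix n p R)
    (A : κ → Matrix p q R) (X : Matrix q m R) (r : ι → R) (u : κ → R) :
    (L * (∑ i, r i • B i) * (∑ k, u k • A k) * X).trace =
      ∑ i, ∑ k, r i * u k * (L * B i * A k * X).trace := by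
  simp only [Matrix.mul_sum, Matrix.sum_mul, Matrix.mul_smul, Matrix.smul_mul, trace_sum,
    trace_smul, smul_eq_mul, Finset.mul_sum, mul_assoc, mul_left_comm (u _)]
  rw [Finset.sum_comm]

end CommRing

theorem IsInjectiveTensor.span_range_mulVec_eq_top {ι m n K : Type*} [Field K] [Fintype m]
    [Fintype n] {A : ι → Matrix m n K} (hA : IsInjectiveTensor A) {x : n → K} (hx : x ≠ 0) :
    Submodule.span K (Set.range fun i => A i *ᵥ x) = ⊤ := by
  classical
  by_contra hspan
  obtain ⟨f, hf, hker⟩ := Submodule.exists_le_ker_of_lt_top _ (lt_top_iff_ne_top.mpr hspan)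
  obtain ⟨φ, rfl⟩ := (dotProductEquiv K m).surjective f
  have hortho (i : ι) : φ ⬝ᵥ A i *ᵥ x = 0 := hker (Submodule.subset_span ⟨i, rfl⟩)
  have hrankOne : vecMulVec x φ = 0 := hA.eq_of_forall_trace_mul_eq fun i => by
    rw [mul_vecMulVec, trace_vecMulVec, dotProduct_comm, hortho, Matrix.mul_zero, trace_zero]
  obtain ⟨b, hb⟩ := Function.ne_iff.mp hx
  have hφ : φ = 0 := funext fun a => (mul_eq_zero.mp (congrFun₂ hrankOne b a)).resolve_left hb
  exact hf (by rw [hφ, map_zero])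

theorem fundamental_lemma_right_general
    {dL dB dR dX P Q Q' S K : Type*} [Field K]
    [Fintype P] [Fintype Q] [Fintype Q'] [Fintype S] [DecidableEq Q']
    {AL : dL → Matrix P Q K} {AR AR' : dR → Matrix Q' S K}
    {B B' : dB → Matrix Q Q' K} {X : dX → Matrix S P K}
    (hAL : IsInjectiveTensor AL) (hAR : IsInjectiveTensor AR) (hB : IsLeftInjectiveTensor B)
    (hX : ∃ a, X a ≠ 0)
    (hsym : ∀ i j k a,
      (AL i * B' j * AR' k * X a).trace = (AL i * B j * AR k * X a).trace) :
    ∃ VR : Matrix Q' Q' K, (∀ j, B' j = B j * VR) ∧ IsUnit VR ∧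
      ∀ VR' : Matrix Q' Q' K, (∀ j, B' j = B j * VR') → VR' = VR := by
  obtain ⟨a, ha⟩ := hX
  have hcut (j k) : B' j * AR' k * X a = B j * AR k * X a :=
    hAL.eq_of_forall_trace_mul_eq fun i => by simpa only [Matrix.mul_assoc] using hsym i j k a
  obtain ⟨y, hy⟩ := Function.ne_iff.mp (mulVec_injective.ne ha)
  rw [zero_mulVec] at hy
  obtain ⟨W, hW⟩ : ∃ W : Matrix Q' Q' K, ∀ j, B' j * W = B j :=
    exists_forall_mul_eq_of_span_eq_top (hAR.span_range_mulVec_eq_top hy)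
      (c' := fun k => AR' k *ᵥ X a *ᵥ y) fun j k => by
        simpa only [mulVec_mulVec, Matrix.mul_assoc] using congrArg (· *ᵥ y) (hcut j k)
  have hWunit : IsUnit W := mulVec_injective_iff_isUnit.mp (hB.mulVec_injective_of_mul_eq hW)
  have hV (j) : B' j = B j * W⁻¹ := by
    rw [← hW, mul_nonsing_inv_cancel_right _ _ ((isUnit_iff_isUnit_det W).mp hWunit)]
  exact ⟨W⁻¹, hV, isUnit_nonsing_inv_iff.mpr hWunit, fun _ hV' =>
    hB.mul_left_cancel fun j => (hV' j).symm.trans (hV j)⟩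

/-- Fundamental Lemma, right version: given injective MPS tensors `A_L`, `A_R`,
a left-injective tensor `B`, a nonzero closure tensor `X`, and invertible
`R`, `U_R` with the symmetry property for the three-site state `Ψ`, there is
a unique matrix `V_R` with `∑ j', R j j' • B j' = B j * V_R` for all `j`, and
this `V_R` is invertible. -/
theorem fundamental_lemma_right
    {dL dB dR dX P Q Q' S : Type*}
    [Fintype dL] [Fintype dB] [Fintype dR] [Fintype dX]
    [Fintype P] [Fintype Q] [Fintype Q'] [Fintype S]
    [DecidableEq Q'] [DecidableEq dR] [DecidableEq dB]
    (AL : dL → Matrix P Q ℂ) (AR : dR → Matrix Q' S ℂ)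
    (B : dB → Matrix Q Q' ℂ) (X : dX → Matrix S P ℂ)
    (hAL : Function.Injective fun Y : Matrix Q P ℂ => fun i : dL => (AL i * Y).trace)
    (hAR : Function.Injective fun Y : Matrix S Q' ℂ => fun k : dR => (AR k * Y).trace)
    (hB : ∀ v : Q' → ℂ, (∀ j, B j *ᵥ v = 0) → v = 0)
    (hX : ∃ a, X a ≠ 0)
    (UR : Matrix dR dR ℂ) (R : Matrix dB dB ℂ)
    (hUR : IsUnit UR) (hR : IsUnit R)
    (hsym : ∀ i j k a,
      (∑ j', ∑ k', R j j' * UR k k' * (AL i * B j' * AR k' * X a).trace) =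
        (AL i * B j * AR k * X a).trace) :
    ∃ VR : Matrix Q' Q' ℂ,
      (∀ j, (∑ j', R j j' • B j') = B j * VR) ∧ IsUnit VR ∧
        ∀ VR' : Matrix Q' Q' ℂ, (∀ j, (∑ j', R j j' • B j') = B j * VR') → VR' = VR :=
  fundamental_lemma_right_general hAL hAR hB hX fun i j k a =>
    (trace_mul_sum_smul_mul_sum_smul_mul (AL i) B AR (X a) (R j) (UR k)).trans (hsym i j k a)
end

section
/- The virtual operators solving the intertwiner relation form a representation: let G be a group, B : d_B → Matrix Q Q' ℂ a right-injective MPS tensor, L : G → Matrix d_B d_B ℂ a representation (L(g*h) = L(g) * L(h), L(1) = 1, each L(g) invertible), and V : G → Matrix Q Q ℂ a family of invertible matrices such that for every g ∈ G and every j : d_B, ∑_{j'} (L(g) j j') • B j' = (V g)⁻¹ * B j. Then V is a group homomorphism into the invertible matrices: V(g*h) = V(g) * V(h) for all g, h ∈ G and V(1) = 1. -/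
open Matrix

/-!
Acting with `L (g * h)` on the physical index means acting with `L h` and then with `L g`. Since
the physical action commutes with multiplication on the left virtual index, this turns `B` into
`(V h)⁻¹ * (V g)⁻¹ * B`. Right-injectivity allows cancelling `B` from the right, so
`(V (g * h))⁻¹ = (V g * V h)⁻¹`, and similarly `(V 1)⁻¹ = 1`.
-/

section MPSTensor

variable {d P Q R : Type*} [Fintype P]

/-- Right-injectivity of an MPS tensor, with the physical index as the argument of `B`: no nonzero
vector on the left virtual index is annihilated by every matrix of `B`. -/
def IsRightInjective [NonUnitalNonAssocSemiring R] (B : d → Matrix P Q R) : Prop :=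
  ∀ w : P → R, (∀ j, w ᵥ* B j = 0) → w = 0

theorem IsRightInjective.eq_of_forall_mul_eq [NonUnitalNonAssocRing R] {B : d → Matrix P Q R}
    (hB : IsRightInjective B) {n : Type*} {X Y : Matrix n P R} (h : ∀ j, X * B j = Y * B j) :
    X = Y := by
  funext a
  refine sub_eq_zero.mp (hB _ fun j ↦ ?_)
  rw [sub_vecMul, ← mul_apply_eq_vecMul, ← mul_apply_eq_vecMul, h j, sub_self]

/-- The intertwiner relation: the operator `A` on the physical index of the tensor `B` is
implemented by left multiplication with `X` on its left virtual index. -/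
def IsVirtualOperator [Fintype d] [NonUnitalNonAssocSemiring R]
    (B : d → Matrix P Q R) (A : Matrix d d R) (X : Matrix P P R) : Prop :=
  ∀ j, ∑ j', A j j' • B j' = X * B j

namespace IsVirtualOperator

theorem unique [Fintype d] [NonUnitalNonAssocRing R] {B : d → Matrix P Q R} {A : Matrix d d R}
    {X Y : Matrix P P R} (hX : IsVirtualOperator B A X) (hY : IsVirtualOperator B A Y)
    (hB : IsRightInjective B) : X = Y :=
  hB.eq_of_forall_mul_eq fun j ↦ (hX j).symm.trans (hY j)

theorem one [Fintype d] [DecidableEq d] [DecidableEq P] [Semiring R]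
    (B : d → Matrix P Q R) : IsVirtualOperator B 1 1 := fun j ↦ by
  simp [one_apply]

theorem mul [Fintype d] [CommSemiring R] {B : d → Matrix P Q R} {A A' : Matrix d d R}
    {X X' : Matrix P P R} (h : IsVirtualOperator B A X) (h' : IsVirtualOperator B A' X') :
    IsVirtualOperator B (A * A') (X' * X) := fun j ↦
  calc ∑ k, (A * A') j k • B k
      = ∑ i, A j i • ∑ k, A' i k • B k := by
        simp_rw [mul_apply, Finset.sum_smul, Finset.smul_sum, smul_smul]
        exact Finset.sum_comm
    _ = X' * ∑ i, A j i • B i := by simp_rw [h' _, Matrix.mul_sum, Matrix.mul_smul]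
    _ = X' * X * B j := by rw [h j, Matrix.mul_assoc]

end IsVirtualOperator

end MPSTensor

theorem virtual_operators_form_representation_general
    {G R d P Q : Type*} [MulOneClass G] [CommRing R]
    [Fintype d] [Fintype P] [DecidableEq d] [DecidableEq P]
    {B : d → Matrix P Q R} (hB : IsRightInjective B)
    {L : G → Matrix d d R} (hL_one : L 1 = 1) (hL_mul : ∀ g h, L (g * h) = L g * L h)
    {V : G → Matrix P P R} (hV : ∀ g, IsUnit (V g))
    (hLV : ∀ g, IsVirtualOperator B (L g) (V g)⁻¹) :
    (∀ g h, V (g * h) = V g * V h) ∧ V 1 = 1 := by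
  have isUnit_det (g : G) : IsUnit (V g).det := (isUnit_iff_isUnit_det _).mp (hV g)
  constructor
  · intro g h
    have hgh : IsVirtualOperator B (L (g * h)) (V g * V h)⁻¹ := by
      rw [hL_mul, Matrix.mul_inv_rev]
      exact (hLV g).mul (hLV h)
    exact inv_inj ((hLV (g * h)).unique hgh hB) (isUnit_det _)
  · have h1 : IsVirtualOperator B (L 1) 1⁻¹ := by
      rw [hL_one, inv_one]
      exact .one B
    exact inv_inj ((hLV 1).unique h1 hB) (isUnit_det _)

/-- The virtual operators solving the intertwiner relation form a representation:
if `B` is right-injective, `L` is a representation on the physical index, and the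
invertible matrices `V g` satisfy `∑ j', L g j j' • B j' = (V g)⁻¹ * B j`, then
`V` is multiplicative and unital. -/
theorem virtual_operators_form_representation
    {G : Type*} [Group G] {dB Q Q' : Type*}
    [Fintype dB] [Fintype Q] [Fintype Q'] [DecidableEq dB] [DecidableEq Q]
    (B : dB → Matrix Q Q' ℂ)
    (hB : ∀ w : Q → ℂ, (∀ j, w ᵥ* B j = 0) → w = 0)
    (L : G → Matrix dB dB ℂ)
    (hL1 : L 1 = 1)
    (hLmul : ∀ g h, L (g * h) = L g * L h)
    (hLunit : ∀ g, IsUnit (L g))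
    (V : G → Matrix Q Q ℂ)
    (hVunit : ∀ g, IsUnit (V g))
    (hint : ∀ g j, (∑ j', L g j j' • B j') = (V g)⁻¹ * B j) :
    (∀ g h, V (g * h) = V g * V h) ∧ V 1 = 1 :=
  virtual_operators_form_representation_general hB hL1 hLmul hVunit hint
end
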